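/- arXiv:1905.08670 — 7 statements merged into one kernel-verified Lean document; each statement's English description precedes it below -/
import Mathlib

section
/- For every finite digraph D, the adichromatic number of D is at most one more than the minimum size of a feedback vertex set of D, i.e. adi(D) ≤ τ(D) + 1. -/
open Function

section Defs

variable {V : Type*}

/-- The vertex set `S` contains a directed cycle of the digraph `D`, i.e. there is a
closed directed walk of positive length all of whose vertices lie in `S`. -/
def HasDicycle (D : V → V → Prop) (S : Set V) : Prop :=
  ∃ v, Relation.TransGen (fun a b => a ∈ S ∧ b ∈ S ∧ D a b) v v

/-- A coloring of the vertices of the digraph `D` with `k` colors all of whose color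
classes are acyclic. -/
def IsAcyclicColoring (D : V → V → Prop) {k : ℕ} (c : V → Fin k) : Prop :=
  ∀ i, ¬ HasDicycle D (c ⁻¹' {i})

/-- A complete acyclic coloring of the digraph `D` with exactly `k` colors: every color is
used, every color class is acyclic, and the union of any two distinct color classes
contains a directed cycle. -/
def IsCompleteAcyclicColoring (D : V → V → Prop) {k : ℕ} (c : V → Fin k) : Prop :=
  Surjective c ∧ IsAcyclicColoring D c ∧
    ∀ i j : Fin k, i ≠ j → HasDicycle D (c ⁻¹' {i} ∪ c ⁻¹' {j})

/-- The dichromatic number: the minimum number of colors in an acyclic coloring. -/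
noncomputable def dichromaticNumber (D : V → V → Prop) : ℕ :=
  sInf {k | ∃ c : V → Fin k, IsAcyclicColoring D c}

/-- The adichromatic number: the maximum number of colors in a complete acyclic coloring. -/
noncomputable def adichromaticNumber (D : V → V → Prop) : ℕ :=
  sSup {k | ∃ c : V → Fin k, IsCompleteAcyclicColoring D c}

/-- A coloring of the vertices of the graph `G` all of whose color classes induce forests. -/
def IsArborealColoring (G : SimpleGraph V) {k : ℕ} (c : V → Fin k) : Prop :=
  ∀ i, (G.induce (c ⁻¹' {i})).IsAcyclic

/-- A complete arboreal coloring of `G` with exactly `k` colors: every color is used, every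
color class induces a forest, and the union of any two distinct color classes contains a
cycle. -/
def IsCompleteArborealColoring (G : SimpleGraph V) {k : ℕ} (c : V → Fin k) : Prop :=
  Surjective c ∧ IsArborealColoring G c ∧
    ∀ i j : Fin k, i ≠ j → ¬ (G.induce (c ⁻¹' {i} ∪ c ⁻¹' {j})).IsAcyclic

/-- The vertex arboricity: the minimum number of colors in an arboreal coloring. -/
noncomputable def vertexArboricity (G : SimpleGraph V) : ℕ :=
  sInf {k | ∃ c : V → Fin k, IsArborealColoring G c}

/-- The a-vertex arboricity: the maximum number of colors in a complete arboreal coloring. -/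
noncomputable def avertexArboricity (G : SimpleGraph V) : ℕ :=
  sSup {k | ∃ c : V → Fin k, IsCompleteArborealColoring G c}

/-- The minimum size of a directed feedback vertex set of the digraph `D`. -/
noncomputable def digraphFVSNumber [Fintype V] (D : V → V → Prop) : ℕ :=
  sInf {n | ∃ F : Finset V, F.card = n ∧ ¬ HasDicycle D ((↑F : Set V)ᶜ)}

/-- The minimum size of a feedback vertex set of the graph `G`. -/
noncomputable def graphFVSNumber [Fintype V] (G : SimpleGraph V) : ℕ :=
  sInf {n | ∃ F : Finset V, F.card = n ∧ (G.induce ((↑F : Set V)ᶜ)).IsAcyclic}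

/-- A complete coloring in the sense of the diachromatic number: all classes are acyclic
and for every ordered pair `(i, j)` of distinct colors there is an arc with tail colored
`j` and head colored `i`. -/
def IsCompleteDiColoring (D : V → V → Prop) {k : ℕ} (c : V → Fin k) : Prop :=
  Surjective c ∧ IsAcyclicColoring D c ∧
    ∀ i j : Fin k, i ≠ j → ∃ u v, D u v ∧ c u = j ∧ c v = i

/-- The diachromatic number of the digraph `D`. -/
noncomputable def diachromaticNumber (D : V → V → Prop) : ℕ :=
  sSup {k | ∃ c : V → Fin k, IsCompleteDiColoring D c}

/-- A complete proper coloring of the graph `G`: proper, surjective, and any two distinct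
colors appear together on some edge. -/
def IsCompleteProperColoring (G : SimpleGraph V) {k : ℕ} (c : V → Fin k) : Prop :=
  Surjective c ∧ (∀ u v, G.Adj u v → c u ≠ c v) ∧
    ∀ i j : Fin k, i ≠ j → ∃ u v, G.Adj u v ∧ c u = i ∧ c v = j

/-- The achromatic number: the maximum number of colors in a complete proper coloring. -/
noncomputable def achromaticNumber (G : SimpleGraph V) : ℕ :=
  sSup {k | ∃ c : V → Fin k, IsCompleteProperColoring G c}

/-- The subdigraph of `D` induced by the vertex set `S`. -/
def induceDigraph (D : V → V → Prop) (S : Set V) : S → S → Prop :=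
  fun a b => D a.1 b.1

/-- `D` is an orientation of the simple graph `G`: every arc of `D` is an edge of `G`, and
every edge of `G` is given exactly one of its two possible directions. -/
def IsOrientation (G : SimpleGraph V) (D : V → V → Prop) : Prop :=
  (∀ u v, D u v → G.Adj u v) ∧ ∀ u v, G.Adj u v → Xor' (D u v) (D v u)

end Defs

/-!
A feedback vertex set meets the union of any two color classes of a complete acyclic coloring, so
it misses at most one class and contains a vertex of each of the others.
-/

section FeedbackVertexSet

variable {V ι : Type*} {D : V → V → Prop} {S T F : Set V}

theorem HasDicycle.mono (hS : HasDicycle D S) (hST : S ⊆ T) : HasDicycle D T :=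
  let ⟨v, hv⟩ := hS
  ⟨v, Relation.TransGen.mono (fun _ _ ⟨ha, hb, hab⟩ => ⟨hST ha, hST hb, hab⟩) v v hv⟩

theorem HasDicycle.nonempty (hS : HasDicycle D S) : S.Nonempty :=
  let ⟨v, hv⟩ := hS
  let ⟨_, ⟨hvS, _⟩, _⟩ := Relation.TransGen.head'_iff.1 hv
  ⟨v, hvS⟩

/-- A feedback vertex set of the digraph `D`, encoded by the acyclicity of its complement; it may be
infinite. -/
def IsFeedbackVertexSet (D : V → V → Prop) (F : Set V) : Prop :=
  ¬ HasDicycle D Fᶜ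

namespace IsFeedbackVertexSet

theorem univ (D : V → V → Prop) : IsFeedbackVertexSet D Set.univ := fun h => by
  simpa only [Set.compl_univ, Set.not_nonempty_empty] using h.nonempty

theorem inter_nonempty (hF : IsFeedbackVertexSet D F) (hS : HasDicycle D S) :
    (S ∩ F).Nonempty := by
  by_contra hSF
  rw [Set.not_nonempty_iff_eq_empty, ← Set.disjoint_iff_inter_eq_empty] at hSF
  exact hF (hS.mono hSF.subset_compl_right)

theorem subsingleton_compl_image {c : V → ι} (hF : IsFeedbackVertexSet D F)
    (hc : Pairwise fun i j => HasDicycle D (c ⁻¹' {i} ∪ c ⁻¹' {j})) :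
    (c '' F)ᶜ.Subsingleton := by
  intro i hi j hj
  by_contra hij
  obtain ⟨v, rfl | rfl, hvF⟩ := hF.inter_nonempty (hc hij)
  · exact hi (Set.mem_image_of_mem c hvF)
  · exact hj (Set.mem_image_of_mem c hvF)

end IsFeedbackVertexSet

theorem exists_isFeedbackVertexSet_card_eq [Fintype V] (D : V → V → Prop) :
    ∃ F : Finset V, F.card = digraphFVSNumber D ∧ IsFeedbackVertexSet D (F : Set V) :=
  Nat.sInf_mem (s := {n | ∃ F : Finset V, F.card = n ∧ IsFeedbackVertexSet D (F : Set V)})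
    ⟨_, Finset.univ, rfl, Finset.coe_univ (α := V) ▸ .univ D⟩

theorem adichromatic_le_fvs_add_one_general {c : V → ι} (hF : IsFeedbackVertexSet D F)
    (hc : Pairwise fun i j => HasDicycle D (c ⁻¹' {i} ∪ c ⁻¹' {j})) :
    ENat.card ι ≤ F.encard + 1 :=
  calc ENat.card ι = (c '' F).encard + (c '' F)ᶜ.encard := by
        rw [Set.encard_add_encard_compl, Set.encard_univ]
    _ ≤ F.encard + 1 :=
        add_le_add (Set.encard_image_le c F)
          (Set.encard_le_one_iff_subsingleton.2 (hF.subsingleton_compl_image hc))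

end FeedbackVertexSet

/-- For every finite digraph `D`, `adi(D) ≤ τ(D) + 1`. -/
theorem adichromatic_le_fvs_add_one {V : Type*} [Fintype V] (D : V → V → Prop)
    (hD : Irreflexive D) :
    adichromaticNumber D ≤ digraphFVSNumber D + 1 := by
  obtain ⟨F, hF_card, hF⟩ := exists_isFeedbackVertexSet_card_eq D
  refine csSup_le' fun k ⟨c, _, _, hc⟩ => ?_
  have hk : (k : ℕ∞) ≤ digraphFVSNumber D + 1 := by
    simpa [hF_card] using adichromatic_le_fvs_add_one_general hF hc
  exact_mod_cast hk
end

section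
/- For all integers m, n ≥ 1, the a-vertex arboricity of the complete bipartite graph K_{m,n} equals min{m, n}. -/
open Function

/-! If a color `i` is absent from a nonempty vertex cover `S`, then every other class contains two
vertices of `S`: otherwise its union with class `i` would be a star plus isolated vertices, hence
acyclic. Recoloring any one vertex of `S` with `i` then makes all colors appear on `S`, so there
are at most `|S|` colors; the two sides of `K_{m,n}` are vertex covers.
Conversely, color the smaller side injectively and the larger side with all of the same colors:
each class is a star plus isolated vertices, and any two classes together contain a 4-cycle. -/

section Acyclic

variable {V : Type*} {G : SimpleGraph V}

lemma isAcyclic_of_isVertexCover_of_subsingleton {S : Set V} (hS : G.IsVertexCover S)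
    (hsub : S.Subsingleton) : G.IsAcyclic := by
  rcases hsub.eq_empty_or_singleton with rfl | ⟨r, rfl⟩
  · rw [SimpleGraph.isVertexCover_empty.mp hS]
    exact SimpleGraph.isAcyclic_bot
  · refine (SimpleGraph.isAcyclic_starGraph r).anti fun u v huv ↦ ?_
    exact SimpleGraph.starGraph_adj.mpr ⟨huv.ne, hS huv⟩

lemma subsingleton_commonNeighbors_of_isAcyclic (hG : G.IsAcyclic) {u v : V} (huv : u ≠ v) :
    (G.commonNeighbors u v).Subsingleton := by
  rintro x ⟨hux, hvx⟩ y ⟨huy, hvy⟩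
  let pathThrough (z : V) (huz : G.Adj u z) (hvz : G.Adj v z) : G.Path u v :=
    ⟨.cons huz (.cons hvz.symm .nil), by simp [huz.ne, hvz.ne', huv]⟩
  have hpath : pathThrough x hux hvx = pathThrough y huy hvy :=
    (hG.subsingleton_path u v).elim _ _
  exact congrArg (fun p ↦ p.1.snd) hpath

end Acyclic

namespace IsCompleteArborealColoring

variable {V : Type*} {G : SimpleGraph V} {k : ℕ} {c : V → Fin k} {S : Set V}

lemma nontrivial_inter_preimage (hc : IsCompleteArborealColoring G c) (hS : G.IsVertexCover S)
    {i j : Fin k} (hi : i ∉ c '' S) (hij : i ≠ j) : (S ∩ c ⁻¹' {j}).Nontrivial := by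
  by_contra hsub
  rw [Set.not_nontrivial_iff] at hsub
  let U := c ⁻¹' {i} ∪ c ⁻¹' {j}
  have hcover : (G.induce U).IsVertexCover (Subtype.val ⁻¹' S) :=
    hS.preimage (SimpleGraph.Embedding.induce U)
  have color_eq : ∀ x : U, x.1 ∈ S → c x = j := fun x hxS ↦
    x.2.resolve_left fun hxi ↦ hi ⟨x, hxS, hxi⟩
  exact hc.2.2 i j hij <| isAcyclic_of_isVertexCover_of_subsingleton hcover fun x hx y hy ↦
    Subtype.ext <| hsub ⟨hx, color_eq x hx⟩ ⟨hy, color_eq y hy⟩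

lemma exists_surjOn_of_isVertexCover (hc : IsCompleteArborealColoring G c)
    (hS : G.IsVertexCover S) (hne : S.Nonempty) : ∃ f : V → Fin k, Set.SurjOn f S Set.univ := by
  classical
  by_cases hsurj : Set.SurjOn c S Set.univ
  · exact ⟨c, hsurj⟩
  obtain ⟨i, -, hi⟩ := Set.not_subset.mp hsurj
  obtain ⟨t, ht⟩ := hne
  refine ⟨update c t i, fun j _ ↦ ?_⟩
  by_cases hij : i = j
  · exact ⟨t, ht, by simp [hij]⟩
  obtain ⟨x, ⟨hx, hxj : c x = j⟩, hxt⟩ :=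
    (hc.nontrivial_inter_preimage hS hi hij).exists_ne t
  exact ⟨x, hx, by simp [hxt, hxj]⟩

lemma le_vertexCoverNum (hc : IsCompleteArborealColoring G c) (hG : G ≠ ⊥) :
    (k : ℕ∞) ≤ G.vertexCoverNum := by
  refine le_iInf₂ fun S hS ↦ ?_
  have hne : S.Nonempty := by
    rw [Set.nonempty_iff_ne_empty]
    rintro rfl
    exact hG (SimpleGraph.isVertexCover_empty.mp hS)
  obtain ⟨f, hf⟩ := hc.exists_surjOn_of_isVertexCover hS hne
  calc (k : ℕ∞) = (Set.univ : Set (Fin k)).encard := by simp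
    _ ≤ (f '' S).encard := Set.encard_le_encard hf
    _ ≤ S.encard := Set.encard_image_le f S

end IsCompleteArborealColoring

lemma exists_surjective_fin_of_le_card {α : Type*} {k : ℕ} [NeZero k]
    (hcard : (k : ℕ∞) ≤ ENat.card α) : ∃ f : α → Fin k, Surjective f := by
  have hlift : Cardinal.lift (Cardinal.mk (Fin k)) ≤ Cardinal.lift (Cardinal.mk α) := by
    simpa [ENat.card] using hcard
  exact exists_surjective_iff.mpr ⟨inferInstance, Cardinal.lift_mk_le'.mp hlift⟩

lemma injective_of_surjective_of_card_le {α β : Type*} [Finite β] {f : α → β}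
    (hf : Surjective f) (hcard : ENat.card α ≤ ENat.card β) : Injective f := by
  have : Finite α := ENat.card_lt_top.mp (hcard.trans_lt ENat.card_lt_top_of_finite)
  have hle : Nat.card α ≤ Nat.card β := by
    simpa only [ENat.card_eq_coe_natCard, Nat.cast_le] using hcard
  exact (hf.bijective_of_nat_card_le hle).injective

section CompleteBipartite

variable {α β : Type*}

lemma completeBipartiteGraph_isVertexCover_range_inl :
    (completeBipartiteGraph α β).IsVertexCover (Set.range Sum.inl) := by
  rintro (a | b) (a' | b') <;> simp

lemma completeBipartiteGraph_isVertexCover_range_inr :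
    (completeBipartiteGraph α β).IsVertexCover (Set.range Sum.inr) := by
  rintro (a | b) (a' | b') <;> simp

lemma vertexCoverNum_completeBipartiteGraph_le :
    (completeBipartiteGraph α β).vertexCoverNum ≤ min (ENat.card α) (ENat.card β) := by
  refine le_min ?_ ?_
  · simpa [← Set.image_univ, Sum.inl_injective.encard_image] using
      (completeBipartiteGraph_isVertexCover_range_inl (α := α) (β := β)).vertexCoverNum_le
  · simpa [← Set.image_univ, Sum.inr_injective.encard_image] using
      (completeBipartiteGraph_isVertexCover_range_inr (α := α) (β := β)).vertexCoverNum_le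

lemma completeBipartiteGraph_ne_bot [Nonempty α] [Nonempty β] :
    completeBipartiteGraph α β ≠ ⊥ := by
  obtain ⟨a⟩ := ‹Nonempty α›
  obtain ⟨b⟩ := ‹Nonempty β›
  exact SimpleGraph.ne_bot_iff_exists_adj.mpr ⟨.inl a, .inr b, by simp⟩

variable {k : ℕ} {f : α → Fin k} {g : β → Fin k}

lemma isArborealColoring_sumElim (hinj : Injective f ∨ Injective g) :
    IsArborealColoring (completeBipartiteGraph α β) (Sum.elim f g) := by
  intro i
  let ι := SimpleGraph.Embedding.induce (G := completeBipartiteGraph α β)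
    (Sum.elim f g ⁻¹' {i})
  rcases hinj with hf | hg
  · refine isAcyclic_of_isVertexCover_of_subsingleton
      (completeBipartiteGraph_isVertexCover_range_inl.preimage ι) ?_
    rintro ⟨_, hx⟩ ⟨a, rfl⟩ ⟨_, hy⟩ ⟨a', rfl⟩
    exact Subtype.ext <| congrArg Sum.inl <| hf <| hx.trans hy.symm
  · refine isAcyclic_of_isVertexCover_of_subsingleton
      (completeBipartiteGraph_isVertexCover_range_inr.preimage ι) ?_
    rintro ⟨_, hx⟩ ⟨b, rfl⟩ ⟨_, hy⟩ ⟨b', rfl⟩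
    exact Subtype.ext <| congrArg Sum.inr <| hg <| hx.trans hy.symm

lemma isCompleteArborealColoring_sumElim (hf : Surjective f) (hg : Surjective g)
    (hinj : Injective f ∨ Injective g) :
    IsCompleteArborealColoring (completeBipartiteGraph α β) (Sum.elim f g) := by
  have hsurj : Surjective (Sum.elim f g) := fun i ↦ (hf i).imp' Sum.inl fun _ ↦ id
  refine ⟨hsurj, isArborealColoring_sumElim hinj, fun i j hij hacyclic ↦ ?_⟩
  obtain ⟨a, ha⟩ := hf i
  obtain ⟨b, hb⟩ := hg i
  obtain ⟨a', ha'⟩ := hf j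
  obtain ⟨b', hb'⟩ := hg j
  let U := Sum.elim f g ⁻¹' {i} ∪ Sum.elim f g ⁻¹' {j}
  let u : U := ⟨.inl a, .inl ha⟩
  let u' : U := ⟨.inl a', .inr ha'⟩
  let v : U := ⟨.inr b, .inl hb⟩
  let v' : U := ⟨.inr b', .inr hb'⟩
  have huu' : u ≠ u' := by grind
  have hvv' : v ≠ v' := by grind
  exact hvv' <| subsingleton_commonNeighbors_of_isAcyclic hacyclic huu'
    ⟨by simp [u, v], by simp [u', v]⟩ ⟨by simp [u, v'], by simp [u', v']⟩

lemma exists_isCompleteArborealColoring_completeBipartiteGraph [Nonempty α] [Nonempty β]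
    (hk : (k : ℕ∞) = min (ENat.card α) (ENat.card β)) :
    ∃ c : α ⊕ β → Fin k, IsCompleteArborealColoring (completeBipartiteGraph α β) c := by
  have : NeZero k := ⟨by
    rintro rfl
    simp [min_eq_iff, eq_comm] at hk⟩
  obtain ⟨f, hf⟩ := exists_surjective_fin_of_le_card (hk.trans_le (min_le_left _ _))
  obtain ⟨g, hg⟩ := exists_surjective_fin_of_le_card (hk.trans_le (min_le_right _ _))
  refine ⟨Sum.elim f g, isCompleteArborealColoring_sumElim hf hg ?_⟩
  have hmin_le_fin : min (ENat.card α) (ENat.card β) ≤ ENat.card (Fin k) := by simp [← hk]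
  exact (min_le_iff.mp le_rfl).imp
    (fun hα ↦ injective_of_surjective_of_card_le hf (hα.trans hmin_le_fin))
    (fun hβ ↦ injective_of_surjective_of_card_le hg (hβ.trans hmin_le_fin))

theorem avertexArboricity_completeBipartite_general [Nonempty α] [Nonempty β]
    (hfin : Finite α ∨ Finite β) :
    (avertexArboricity (completeBipartiteGraph α β) : ℕ∞) =
      min (ENat.card α) (ENat.card β) := by
  have hne_top : min (ENat.card α) (ENat.card β) ≠ ⊤ := by
    simpa [min_eq_top, or_iff_not_imp_left] using hfin
  obtain ⟨k, hk⟩ := ENat.ne_top_iff_exists.mp hne_top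
  have hgreatest : IsGreatest {l | ∃ c : α ⊕ β → Fin l,
      IsCompleteArborealColoring (completeBipartiteGraph α β) c} k := by
    refine ⟨exists_isCompleteArborealColoring_completeBipartiteGraph hk, ?_⟩
    rintro l ⟨c, hc⟩
    have hl : (l : ℕ∞) ≤ k := calc
      (l : ℕ∞) ≤ (completeBipartiteGraph α β).vertexCoverNum :=
        hc.le_vertexCoverNum completeBipartiteGraph_ne_bot
      _ ≤ min (ENat.card α) (ENat.card β) := vertexCoverNum_completeBipartiteGraph_le
      _ = k := hk.symm
    exact_mod_cast hl
  rw [← hk, avertexArboricity, hgreatest.csSup_eq]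

end CompleteBipartite

/-- For all `m, n ≥ 1`, `ava(K_{m,n}) = min{m, n}`. -/
theorem avertexArboricity_completeBipartite (m n : ℕ) (hm : 1 ≤ m) (hn : 1 ≤ n) :
    avertexArboricity (completeBipartiteGraph (Fin m) (Fin n)) = min m n := by
  have : Nonempty (Fin m) := Fin.pos_iff_nonempty.mp hm
  have : Nonempty (Fin n) := Fin.pos_iff_nonempty.mp hn
  simpa [← Nat.mono_cast.map_min] using
    avertexArboricity_completeBipartite_general (α := Fin m) (β := Fin n) (.inl inferInstance)
end

section
/- For every integer n ≥ 1, the a-vertex arboricity of the complete graph K_n equals ⌈n/2⌉. -/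
open Function

/-!
A graph on at most two vertices is a forest, so in a complete arboreal coloring of any finite graph
two classes together have at least three vertices. Hence at most one class is a singleton, which
gives `2k - 1 ≤ |V|`. In a complete graph a vertex set induces a forest exactly when it has at most
two elements, so splitting the vertices into pairs, with one singleton if their number is odd,
attains this bound.
-/

section Acyclic

variable {V : Type*} {s : Set V}

lemma isAcyclic_induce_of_ncard_le_two (G : SimpleGraph V) (hs : s.Finite) (h : s.ncard ≤ 2) :
    (G.induce s).IsAcyclic := by
  apply SimpleGraph.IsAcyclic.of_card_le_two
  rw [ENat.card_coe_set_eq, ← hs.cast_ncard_eq]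
  exact_mod_cast h

lemma isAcyclic_induce_top_iff (hs : s.Finite) :
    ((⊤ : SimpleGraph V).induce s).IsAcyclic ↔ s.ncard ≤ 2 := by
  classical
  refine ⟨fun hacyclic => ?_, isAcyclic_induce_of_ncard_le_two ⊤ hs⟩
  by_contra! hcard
  obtain ⟨a, b, c, ha, hb, hc, hab, hac, hbc⟩ := (Set.two_lt_ncard_iff hs).1 hcard
  have triangle : ((⊤ : SimpleGraph V).induce s).IsNClique 3 {⟨a, ha⟩, ⟨b, hb⟩, ⟨c, hc⟩} :=
    SimpleGraph.is3Clique_triple_iff.2 ⟨hab, hac, hbc⟩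
  exact hacyclic.cliqueFree le_rfl _ triangle

end Acyclic

section Counting

lemma natCard_eq_sum_ncard_fiber {α ι : Type*} [Finite α] [Fintype ι] (f : α → ι) :
    Nat.card α = ∑ i, (f ⁻¹' {i}).ncard :=
  (Nat.card_congr (Equiv.sigmaFiberEquiv f).symm).trans Nat.card_sigma

lemma two_mul_card_le_sum_add_one {ι : Type*} [Fintype ι] {f : ι → ℕ} (hpos : ∀ i, 0 < f i)
    (hpair : Pairwise fun i j => 2 < f i + f j) : 2 * Fintype.card ι ≤ ∑ i, f i + 1 := by
  classical
  by_cases hsmall : ∃ i₀, f i₀ < 2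
  · obtain ⟨i₀, hi₀⟩ := hsmall
    have two_le (i : ι) : 2 ≤ f i + if i = i₀ then 1 else 0 := by
      split_ifs with hi
      · have := hpos i
        omega
      · have := hpair hi
        omega
    calc 2 * Fintype.card ι = ∑ _i : ι, 2 := by simp [mul_comm]
      _ ≤ ∑ i, (f i + if i = i₀ then 1 else 0) := Finset.sum_le_sum fun i _ => two_le i
      _ = ∑ i, f i + 1 := by simp [Finset.sum_add_distrib]
  · push Not at hsmall
    calc 2 * Fintype.card ι = ∑ _i : ι, 2 := by simp [mul_comm]
      _ ≤ ∑ i, f i := Finset.sum_le_sum fun i _ => hsmall i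
      _ ≤ ∑ i, f i + 1 := Nat.le_succ _

end Counting

namespace IsCompleteArborealColoring

variable {V W : Type*} {G : SimpleGraph V} {H : SimpleGraph W} {k : ℕ}

lemma two_lt_ncard_add_ncard [Finite V] {c : V → Fin k} (hc : IsCompleteArborealColoring G c)
    {i j : Fin k} (hij : i ≠ j) : 2 < (c ⁻¹' {i}).ncard + (c ⁻¹' {j}).ncard := by
  obtain ⟨-, -, hcycle⟩ := hc
  have two_lt_union : 2 < (c ⁻¹' {i} ∪ c ⁻¹' {j}).ncard := by
    by_contra! hle
    exact hcycle i j hij (isAcyclic_induce_of_ncard_le_two G (Set.toFinite _) hle)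
  exact two_lt_union.trans_le (Set.ncard_union_le _ _)

lemma two_mul_le_natCard_add_one [Finite V] {c : V → Fin k}
    (hc : IsCompleteArborealColoring G c) : 2 * k ≤ Nat.card V + 1 := by
  have class_pos (i : Fin k) : 0 < (c ⁻¹' {i}).ncard :=
    (Set.ncard_pos (Set.toFinite _)).2 (hc.1 i)
  calc 2 * k = 2 * Fintype.card (Fin k) := by rw [Fintype.card_fin]
    _ ≤ ∑ i, (c ⁻¹' {i}).ncard + 1 :=
      two_mul_card_le_sum_add_one class_pos fun _ _ => hc.two_lt_ncard_add_ncard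
    _ = Nat.card V + 1 := by rw [natCard_eq_sum_ncard_fiber c]

lemma comp_iso {c : W → Fin k} (hc : IsCompleteArborealColoring H c) (φ : G ≃g H) :
    IsCompleteArborealColoring G (c ∘ φ) := by
  obtain ⟨hsurj, hforest, hcycle⟩ := hc
  have isAcyclic_preimage_iff (s : Set W) :
      (G.induce (φ ⁻¹' s)).IsAcyclic ↔ (H.induce s).IsAcyclic :=
    (φ.induce φ.bijective.bijOn_preimage).isAcyclic_iff
  exact ⟨hsurj.comp φ.surjective, fun i => (isAcyclic_preimage_iff _).2 (hforest i),
    fun i j hij => (isAcyclic_preimage_iff _).not.2 (hcycle i j hij)⟩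

end IsCompleteArborealColoring

section Pairing

variable {n : ℕ}

/-- The coloring of `K_n` that pairs consecutive vertices: the color classes are `{0, 1}`, `{2, 3}`,
and so on, the last one being a singleton when `n` is odd. -/
def pairColoring (n : ℕ) (v : Fin n) : Fin ((n + 1) / 2) :=
  ⟨v / 2, by omega⟩

lemma pairColoring_eq_iff {v : Fin n} {i : Fin ((n + 1) / 2)} :
    pairColoring n v = i ↔ (v : ℕ) / 2 = i :=
  Fin.ext_iff

lemma pairColoring_surjective : Surjective (pairColoring n) := fun i =>
  ⟨⟨2 * i, by omega⟩, pairColoring_eq_iff.2 (Nat.mul_div_cancel_left _ two_pos)⟩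

lemma ncard_pairColoring_fiber_le_two (i : Fin ((n + 1) / 2)) :
    (pairColoring n ⁻¹' {i}).ncard ≤ 2 := by
  have maps_to_pair : ∀ v ∈ pairColoring n ⁻¹' {i},
      (v : ℕ) ∈ ({2 * (i : ℕ), 2 * (i : ℕ) + 1} : Set ℕ) := by
    intro v hv
    have := pairColoring_eq_iff.1 hv
    rw [Set.mem_insert_iff, Set.mem_singleton_iff]
    omega
  calc (pairColoring n ⁻¹' {i}).ncard ≤ ({2 * (i : ℕ), 2 * (i : ℕ) + 1} : Set ℕ).ncard :=
        Set.ncard_le_ncard_of_injOn _ maps_to_pair Fin.val_injective.injOn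
    _ = 2 := Set.ncard_pair (by omega)

lemma two_lt_ncard_union_pairColoring_fibers {i j : Fin ((n + 1) / 2)} (hij : i ≠ j) :
    2 < (pairColoring n ⁻¹' {i} ∪ pairColoring n ⁻¹' {j}).ncard := by
  wlog hlt : i < j generalizing i j
  · rw [Set.union_comm]
    exact this hij.symm (lt_of_le_of_ne (not_lt.1 hlt) hij.symm)
  -- Only the last class can be a singleton, so the smaller color `i` has two vertices.
  rw [Set.two_lt_ncard_iff]
  refine ⟨⟨2 * i, by omega⟩, ⟨2 * i + 1, by omega⟩, ⟨2 * j, by omega⟩,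
    .inl (pairColoring_eq_iff.2 ?_), .inl (pairColoring_eq_iff.2 ?_),
    .inr (pairColoring_eq_iff.2 ?_), ?_, ?_, ?_⟩ <;>
  simp only [ne_eq, Fin.mk.injEq] <;> omega

lemma isCompleteArborealColoring_pairColoring :
    IsCompleteArborealColoring ⊤ (pairColoring n) :=
  ⟨pairColoring_surjective,
    fun i => (isAcyclic_induce_top_iff (Set.toFinite _)).2 (ncard_pairColoring_fiber_le_two i),
    fun _ _ hij => (isAcyclic_induce_top_iff (Set.toFinite _)).not.2
      (two_lt_ncard_union_pairColoring_fibers hij).not_ge⟩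

end Pairing

theorem avertexArboricity_complete_general (V : Type*) [Finite V] :
    avertexArboricity (⊤ : SimpleGraph V) = (Nat.card V + 1) / 2 := by
  refine IsGreatest.csSup_eq ⟨?_, ?_⟩
  · exact ⟨_, isCompleteArborealColoring_pairColoring.comp_iso
      (SimpleGraph.Iso.completeGraph (Finite.equivFin V))⟩
  · rintro k ⟨c, hc⟩
    have := hc.two_mul_le_natCard_add_one
    omega

/-- For every `n ≥ 1`, `ava(K_n) = ⌈n/2⌉`. -/
theorem avertexArboricity_complete (n : ℕ) (hn : 1 ≤ n) :
    avertexArboricity (⊤ : SimpleGraph (Fin n)) = (n + 1) / 2 := by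
  rw [avertexArboricity_complete_general, Nat.card_fin]
end

section
/- For every integer n ≥ 1, let D_n be the orientation of the complete bipartite graph K_{n,n} with parts A = {a_1, …, a_n} and B = {b_1, …, b_n} in which the perfect matching edges are oriented a_i → b_i for each i, and every non-matching edge is oriented b_j → a_i (for i ≠ j). Then adi(D_n) = n. -/
open Function

/-- The orientation `D_n` of `K_{n,n}`: the perfect matching edges `a_i b_i` are directed
`a_i → b_i`, and all non-matching edges `a_i b_j` (with `i ≠ j`) are directed `b_j → a_i`. -/
def matchingOrientation (n : ℕ) : (Fin n ⊕ Fin n) → (Fin n ⊕ Fin n) → Prop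
  | Sum.inl i, Sum.inr j => i = j
  | Sum.inr j, Sum.inl i => i ≠ j
  | _, _ => False

/-!
A dicycle alternates between the two sides and leaves `a_i` only along the matching edge `a_i b_i`,
from which it cannot return to `a_i` directly, so it uses at least two matching edges; conversely
any two matching edges span a directed 4-cycle. Thus a vertex set contains a dicycle exactly when it
contains two matching edges, and coloring both `a_i` and `b_i` with `i` is complete.

For the upper bound, let `u`, `v` be distinct colors. The two matching edges inside the union of
their classes cannot both lie in the class of `v`, so some vertex colored `u` has its partner
colored `u` or `v`. When there are at least three colors, applying this with two choices of `v`
shows that every class has at least two vertices, so there are at most `2n / 2` classes.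
-/

theorem exists_rel_and_transGen_self {α : Type*} {R : α → α → Prop} {a : α}
    (h : Relation.TransGen R a a) : ∃ b, R a b ∧ Relation.TransGen R b b := by
  obtain ⟨b, hab, hba⟩ := Relation.TransGen.head'_iff.1 h
  exact ⟨b, hab, .tail' hba hab⟩

theorem two_mul_card_le_of_nontrivial_fibers {α β : Type*} [Fintype α] [Fintype β] (f : α → β)
    (hf : ∀ b, (f ⁻¹' {b}).Nontrivial) : 2 * Fintype.card β ≤ Fintype.card α := by
  classical
  refine Finset.mul_card_image_le_card_of_maps_to (f := f) (fun a _ => Finset.mem_univ _) 2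
    fun b _ => ?_
  obtain ⟨a, ha, a', ha', hne⟩ := hf b
  exact Finset.one_lt_card.2 ⟨a, by simpa using ha, a', by simpa using ha', hne⟩

namespace matchingOrientation

variable {n : ℕ} {S : Set (Fin n ⊕ Fin n)}

theorem nontrivial_of_hasDicycle (h : HasDicycle (matchingOrientation n) S) :
    {i | Sum.inl i ∈ S ∧ Sum.inr i ∈ S}.Nontrivial := by
  let R (x y : Fin n ⊕ Fin n) : Prop := x ∈ S ∧ y ∈ S ∧ matchingOrientation n x y
  obtain ⟨i, hi⟩ : ∃ i, Relation.TransGen R (.inl i) (.inl i) := by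
    obtain ⟨i | i, hi⟩ := h
    · exact ⟨i, hi⟩
    · obtain ⟨j | j, ⟨-, -, hij⟩, hj⟩ := exists_rel_and_transGen_self hi
      · exact ⟨j, hj⟩
      · exact hij.elim
  have leave_inl {j : Fin n} (hj : Relation.TransGen R (.inl j) (.inl j)) :
      Sum.inl j ∈ S ∧ Sum.inr j ∈ S ∧ Relation.TransGen R (.inr j) (.inr j) := by
    obtain ⟨l | l, ⟨haj, hbl, hjl⟩, hl⟩ := exists_rel_and_transGen_self hj
    · exact hjl.elim
    · obtain rfl : j = l := hjl
      exact ⟨haj, hbl, hl⟩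
  obtain ⟨hai, hbi, hi⟩ := leave_inl hi
  obtain ⟨j | j, ⟨-, -, hji⟩, hj⟩ := exists_rel_and_transGen_self hi
  · obtain ⟨haj, hbj, -⟩ := leave_inl hj
    exact ⟨j, ⟨haj, hbj⟩, i, ⟨hai, hbi⟩, hji⟩
  · exact hji.elim

theorem hasDicycle_iff :
    HasDicycle (matchingOrientation n) S ↔ {i | Sum.inl i ∈ S ∧ Sum.inr i ∈ S}.Nontrivial := by
  refine ⟨nontrivial_of_hasDicycle, ?_⟩
  rintro ⟨i, ⟨hai, hbi⟩, j, ⟨haj, hbj⟩, hij⟩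
  let R (x y : Fin n ⊕ Fin n) : Prop := x ∈ S ∧ y ∈ S ∧ matchingOrientation n x y
  have h₁ : R (.inl i) (.inr i) := ⟨hai, hbi, rfl⟩
  have h₂ : R (.inr i) (.inl j) := ⟨hbi, haj, hij.symm⟩
  have h₃ : R (.inl j) (.inr j) := ⟨haj, hbj, rfl⟩
  have h₄ : R (.inr j) (.inl i) := ⟨hbj, hai, hij⟩
  exact ⟨.inl i, .head h₁ <| .head h₂ <| .head h₃ <| .single h₄⟩

variable (n) in
theorem isCompleteAcyclicColoring_elim_id :
    IsCompleteAcyclicColoring (matchingOrientation n) (Sum.elim id id) := by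
  refine ⟨fun i => ⟨.inl i, rfl⟩, fun i => ?_, fun i j hij => ?_⟩
  · rw [hasDicycle_iff]
    rintro ⟨j, ⟨hj, -⟩, l, ⟨hl, -⟩, hjl⟩
    exact hjl (hj.trans hl.symm)
  · rw [hasDicycle_iff]
    exact ⟨i, by simp, j, by simp, hij⟩

variable {k : ℕ} {c : Fin n ⊕ Fin n → Fin k}

theorem exists_color_eq_and_color_swap
    (hc : IsCompleteAcyclicColoring (matchingOrientation n) c) {u v : Fin k} (huv : u ≠ v) :
    ∃ x, c x = u ∧ (c x.swap = u ∨ c x.swap = v) := by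
  obtain ⟨-, hacyclic, hcomplete⟩ := hc
  by_contra! hu
  have hclass {i : Fin n} (ha : c (.inl i) = u ∨ c (.inl i) = v)
      (hb : c (.inr i) = u ∨ c (.inr i) = v) : c (.inl i) = v ∧ c (.inr i) = v := by
    have hau : c (.inl i) = u → c (.inr i) ≠ u ∧ c (.inr i) ≠ v := hu (.inl i)
    have hbu : c (.inr i) = u → c (.inl i) ≠ u ∧ c (.inl i) ≠ v := hu (.inr i)
    tauto
  refine hacyclic v (hasDicycle_iff.2 ?_)
  exact (hasDicycle_iff.1 (hcomplete u v huv)).mono fun i ⟨ha, hb⟩ => hclass ha hb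

theorem nontrivial_colorClass (hc : IsCompleteAcyclicColoring (matchingOrientation n) c)
    (hk : 3 ≤ k) (u : Fin k) : (c ⁻¹' {u}).Nontrivial := by
  obtain ⟨v, hvu, -⟩ := Cardinal.exists_ne_ne_of_three_le (by simpa using hk) u u
  obtain ⟨w, hwu, hwv⟩ := Cardinal.exists_ne_ne_of_three_le (by simpa using hk) u v
  obtain ⟨x, hxu, hx⟩ := exists_color_eq_and_color_swap hc hvu.symm
  obtain ⟨y, hyu, hy⟩ := exists_color_eq_and_color_swap hc hwu.symm
  by_cases hxy : x = y
  · subst hxy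
    have hswap : c x.swap = u :=
      hx.elim id fun hxv => hy.elim id fun hxw => absurd (hxw.symm.trans hxv) hwv
    exact ⟨x, hxu, x.swap, hswap, by cases x <;> simp⟩
  · exact ⟨x, hxu, y, hyu, hxy⟩

theorem two_le_of_two_le_colors (hc : IsCompleteAcyclicColoring (matchingOrientation n) c)
    (hk : 2 ≤ k) : 2 ≤ n := by
  have : Nontrivial (Fin k) := Fin.nontrivial_iff_two_le.2 hk
  obtain ⟨u, v, huv⟩ := exists_pair_ne (Fin k)
  obtain ⟨i, -, j, -, hij⟩ := hasDicycle_iff.1 (hc.2.2 u v huv)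
  exact Fin.nontrivial_iff_two_le.1 ⟨i, j, hij⟩

theorem card_colors_le (hc : IsCompleteAcyclicColoring (matchingOrientation n) c) : k ≤ n := by
  by_cases hk : 3 ≤ k
  · have := two_mul_card_le_of_nontrivial_fibers c (nontrivial_colorClass hc hk)
    simp only [Fintype.card_fin, Fintype.card_sum] at this
    lia
  · have hsurj := Fintype.card_le_of_surjective c hc.1
    simp only [Fintype.card_fin, Fintype.card_sum] at hsurj
    have := two_le_of_two_le_colors hc
    lia

end matchingOrientation

/-- For every `n ≥ 1`, `adi(D_n) = n`. -/
theorem adichromatic_matchingOrientation (n : ℕ) (hn : 1 ≤ n) :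
    adichromaticNumber (matchingOrientation n) = n := by
  refine IsGreatest.csSup_eq ⟨⟨Sum.elim id id, ?_⟩, ?_⟩
  · exact matchingOrientation.isCompleteAcyclicColoring_elim_id n
  · rintro k ⟨c, hc⟩
    exact matchingOrientation.card_colors_le hc
end

section
/- Let G be a finite simple graph and let ℓ be a positive integer. Then there exists a complete arboreal coloring of G using exactly ℓ colors if and only if va(G) ≤ ℓ ≤ ava(G). -/
open Function

/-!
Only one property of forests matters: a subset of a vertex set inducing a forest induces a forest.
So let `𝓕` be any family of vertex sets closed under subsets, and let `c` be a complete coloring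
with `k` colors and classes in `𝓕`. For a set `T` of colors of `c`, let `f T` be the least number of
colors of a coloring with classes in `𝓕` that is constant on each class of `c` with color in `T`.
A coloring attaining `f T` is complete: two classes with union in `𝓕` could be merged without
breaking the constancy. Moreover `f ∅` is the unconstrained minimum, `f univ ≥ k` because `c` is
complete, and `f` grows by at most one when `T` gains a color, since the corresponding class of `c`
can be given a new color. Hence `f` takes every value between its minimum and `k`.
-/

theorem exists_finset_eq_of_insert_le_succ {α : Type*} [DecidableEq α] {f : Finset α → ℕ}
    (hf : ∀ a s, f (insert a s) ≤ f s + 1) {n : ℕ} (hempty : f ∅ ≤ n) {s : Finset α}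
    (hs : n ≤ f s) : ∃ t, f t = n := by
  induction s using Finset.induction_on with
  | empty => exact ⟨∅, hempty.antisymm hs⟩
  | insert a s _ ih =>
    rcases le_or_gt n (f s) with hn | hn
    · exact ih hn
    · exact ⟨insert a s, ((hf a s).trans hn).antisymm hs⟩

section HereditaryColoring

variable {V α β : Type*}

/-- Coloring of a set by the members of a hereditary family: every color class lies in `𝓕`.
Colors may be unused if `∅ ∈ 𝓕`. -/
def IsHereditaryColoring (𝓕 : LowerSet (Set V)) (c : V → α) : Prop :=
  ∀ i, c ⁻¹' {i} ∈ 𝓕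

/-- Complete coloring by the members of a hereditary family: every color is used, every color class
lies in `𝓕`, and no two classes can be merged. -/
def IsCompleteHereditaryColoring (𝓕 : LowerSet (Set V)) (c : V → α) : Prop :=
  Surjective c ∧ IsHereditaryColoring 𝓕 c ∧ ∀ i j, i ≠ j → c ⁻¹' {i} ∪ c ⁻¹' {j} ∉ 𝓕

/-- The minimum number of colors in a coloring with classes in `𝓕`, and `0` if no such coloring
is finite. It generalizes the vertex arboricity. -/
noncomputable def hereditaryChromaticNumber (𝓕 : LowerSet (Set V)) : ℕ :=
  sInf {k | ∃ c : V → Fin k, IsHereditaryColoring 𝓕 c}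

/-- The maximum number of colors in a complete coloring with classes in `𝓕`, and `0` if there is
none or these numbers are unbounded. It generalizes the a-vertex arboricity. -/
noncomputable def hereditaryAchromaticNumber (𝓕 : LowerSet (Set V)) : ℕ :=
  sSup {k | ∃ c : V → Fin k, IsCompleteHereditaryColoring 𝓕 c}

/-- Existence of a coloring with `n` colors and classes in `𝓕` that gives `r`-related points the
same color. The relation `r` is arbitrary and encodes which points have to stay together. -/
def RespectfulColorable (𝓕 : LowerSet (Set V)) (r : V → V → Prop) (n : ℕ) : Prop :=
  ∃ c : V → Fin n, IsHereditaryColoring 𝓕 c ∧ ∀ ⦃u v⦄, r u v → c u = c v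

/-- The minimum number of colors in a coloring with classes in `𝓕` that gives `r`-related points
the same color, and `0` if no such coloring is finite. -/
noncomputable def respectfulChromaticNumber (𝓕 : LowerSet (Set V)) (r : V → V → Prop) : ℕ :=
  sInf {n | RespectfulColorable 𝓕 r n}

/-- Two points are related if they share a color of `c` that belongs to `T`. A coloring respects
this relation iff it is constant on each class of `c` with color in `T`. -/
def SameClassIn (c : V → α) (T : Set α) (u v : V) : Prop :=
  c u = c v ∧ c u ∈ T

variable {𝓕 : LowerSet (Set V)} {r : V → V → Prop} {c : V → α}

namespace IsHereditaryColoring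

theorem of_comp {φ : α → β} (h : IsHereditaryColoring 𝓕 (φ ∘ c)) : IsHereditaryColoring 𝓕 c :=
  fun i => 𝓕.lower (fun _ hv => congrArg φ hv) (h (φ i))

theorem update_comp [DecidableEq α] (hc : IsHereditaryColoring 𝓕 c) {i j : α}
    (hij : c ⁻¹' {i} ∪ c ⁻¹' {j} ∈ 𝓕) : IsHereditaryColoring 𝓕 (update id i j ∘ c) := by
  intro a
  by_cases ha : a = j
  · refine 𝓕.lower (fun v (hv : update id i j (c v) = a) => ?_) hij
    change c v = i ∨ c v = j
    grind [update_apply]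
  · refine 𝓕.lower (fun v (hv : update id i j (c v) = a) => ?_) (hc a)
    change c v = a
    grind [update_apply]

open Classical in
theorem piecewise_none (hc : IsHereditaryColoring 𝓕 c) {A : Set V} (hA : A ∈ 𝓕) :
    IsHereditaryColoring 𝓕 (A.piecewise (fun _ => none) (some ∘ c)) := by
  rintro (_ | i)
  · exact 𝓕.lower (fun v hv => by by_contra h; simp [h] at hv) hA
  · exact 𝓕.lower (fun v hv => by by_cases h : v ∈ A <;> simp_all) (hc i)

theorem respectfulColorable [Finite α] (hc : IsHereditaryColoring 𝓕 c)
    (hr : ∀ ⦃u v⦄, r u v → c u = c v) : RespectfulColorable 𝓕 r (Nat.card α) :=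
  let e := Finite.equivFin α
  ⟨e ∘ c, of_comp (φ := e.symm) (by simpa [← comp_assoc] using hc),
    fun _ _ huv => congrArg e (hr huv)⟩

theorem exists_respectfulColorable_lt [Finite α] (hc : IsHereditaryColoring 𝓕 c)
    (hr : ∀ ⦃u v⦄, r u v → c u = c v) {i : α} (hi : ∀ v, c v ≠ i) :
    ∃ m < Nat.card α, RespectfulColorable 𝓕 r m := by
  let c' : V → {j // j ≠ i} := fun v => ⟨c v, hi v⟩
  have hc' : IsHereditaryColoring 𝓕 c' := of_comp (φ := Subtype.val) hc
  exact ⟨_, Finite.card_subtype_lt (not_not.2 rfl),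
    hc'.respectfulColorable fun _ _ huv => Subtype.ext (hr huv)⟩

theorem isComplete_of_forall_le [Finite α] (hc : IsHereditaryColoring 𝓕 c)
    (hr : ∀ ⦃u v⦄, r u v → c u = c v) (hmin : ∀ m, RespectfulColorable 𝓕 r m → Nat.card α ≤ m) :
    IsCompleteHereditaryColoring 𝓕 c := by
  classical
  refine ⟨fun i => ?_, hc, fun i j hij hunion => ?_⟩
  · by_contra! hi
    obtain ⟨m, hlt, hm⟩ := hc.exists_respectfulColorable_lt hr hi
    exact (hmin m hm).not_gt hlt
  · have hi : ∀ v, (update id i j ∘ c) v ≠ i := by grind [update_apply]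
    obtain ⟨m, hlt, hm⟩ := (hc.update_comp hunion).exists_respectfulColorable_lt
      (fun _ _ huv => congrArg (update id i j) (hr huv)) hi
    exact (hmin m hm).not_gt hlt

end IsHereditaryColoring

namespace IsCompleteHereditaryColoring

theorem card_le_of_factorsThrough [Finite β] (hc : IsCompleteHereditaryColoring 𝓕 c) {g : V → β}
    (hg : IsHereditaryColoring 𝓕 g) (hgc : g.FactorsThrough c) : Nat.card α ≤ Nat.card β := by
  obtain ⟨hsurj, -, hunion⟩ := hc
  let ψ : α → β := g ∘ surjInv hsurj
  have hψ : ∀ v, g v = ψ (c v) := fun v => hgc (surjInv_eq hsurj (c v)).symm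
  refine Nat.card_le_card_of_injective ψ fun i j hij => ?_
  by_contra hne
  refine hunion i j hne (𝓕.lower ?_ (hg (ψ i)))
  rintro v (rfl | rfl)
  · exact hψ v
  · exact (hψ v).trans hij.symm

end IsCompleteHereditaryColoring

theorem bddAbove_isCompleteHereditaryColoring [Finite V] (𝓕 : LowerSet (Set V)) :
    BddAbove {k | ∃ c : V → Fin k, IsCompleteHereditaryColoring 𝓕 c} := by
  refine ⟨Nat.card V, ?_⟩
  rintro k ⟨c, hc⟩
  simpa using Nat.card_le_card_of_surjective c hc.1

namespace RespectfulColorable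

theorem at_respectfulChromaticNumber {n : ℕ} (h : RespectfulColorable 𝓕 r n) :
    RespectfulColorable 𝓕 r (respectfulChromaticNumber 𝓕 r) :=
  Nat.sInf_mem (s := {n | RespectfulColorable 𝓕 r n}) ⟨n, h⟩

theorem exists_isComplete {n : ℕ} (h : RespectfulColorable 𝓕 r n) :
    ∃ c : V → Fin (respectfulChromaticNumber 𝓕 r), IsCompleteHereditaryColoring 𝓕 c := by
  obtain ⟨c, hc, hr⟩ := h.at_respectfulChromaticNumber
  exact ⟨c, hc.isComplete_of_forall_le hr fun m hm =>
    (Nat.card_fin _).trans_le (Nat.sInf_le hm)⟩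

theorem insert_sameClassIn {n : ℕ} {a : α} {T : Set α} (ha : c ⁻¹' {a} ∈ 𝓕)
    (h : RespectfulColorable 𝓕 (SameClassIn c T) n) :
    RespectfulColorable 𝓕 (SameClassIn c (insert a T)) (n + 1) := by
  classical
  obtain ⟨g, hg, hgT⟩ := h
  have hrespects : ∀ ⦃u v⦄, SameClassIn c (insert a T) u v →
      (c ⁻¹' {a}).piecewise (fun _ => none) (some ∘ g) u =
        (c ⁻¹' {a}).piecewise (fun _ => none) (some ∘ g) v := by
    rintro u v ⟨huv, hu⟩
    by_cases hua : c u = a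
    · simp [← huv, hua]
    · have huT : c u ∈ T := hu.resolve_left hua
      simp [← huv, hua, hgT ⟨huv, huT⟩]
  simpa using (hg.piecewise_none ha).respectfulColorable hrespects

end RespectfulColorable

theorem exists_isCompleteHereditaryColoring_of_le_of_le {k ℓ : ℕ} {c : V → Fin k}
    (hc : IsCompleteHereditaryColoring 𝓕 c) (hmin : hereditaryChromaticNumber 𝓕 ≤ ℓ)
    (hℓk : ℓ ≤ k) : ∃ g : V → Fin ℓ, IsCompleteHereditaryColoring 𝓕 g := by
  let f : Finset (Fin k) → ℕ := fun T => respectfulChromaticNumber 𝓕 (SameClassIn c T)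
  have hcolorable : ∀ T : Finset (Fin k), RespectfulColorable 𝓕 (SameClassIn c T) k :=
    fun T => ⟨c, hc.2.1, fun _ _ huv => huv.1⟩
  have hstep : ∀ a T, f (insert a T) ≤ f T + 1 := fun a T => Nat.sInf_le <| by
    simpa using (hcolorable T).at_respectfulChromaticNumber.insert_sameClassIn (hc.2.1 a)
  have hempty : f ∅ ≤ ℓ := by
    obtain ⟨g, hg⟩ := Nat.sInf_mem (s := {n | ∃ g : V → Fin n, IsHereditaryColoring 𝓕 g})
      ⟨k, c, hc.2.1⟩
    have hle : f ∅ ≤ hereditaryChromaticNumber 𝓕 :=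
      Nat.sInf_le ⟨g, hg, fun _ _ huv => absurd huv.2 (by simp)⟩
    exact hle.trans hmin
  have huniv : ℓ ≤ f Finset.univ := by
    obtain ⟨g, hg, hgc⟩ := (hcolorable Finset.univ).at_respectfulChromaticNumber
    have hle : k ≤ f Finset.univ := by
      simpa only [Nat.card_fin] using
        hc.card_le_of_factorsThrough hg fun u v huv => hgc ⟨huv, by simp⟩
    exact hℓk.trans hle
  obtain ⟨T, rfl⟩ := exists_finset_eq_of_insert_le_succ hstep hempty huniv
  exact (hcolorable T).exists_isComplete

theorem interpolation_avertexArboricity_general (𝓕 : LowerSet (Set V))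
    (hbdd : BddAbove {k | ∃ c : V → Fin k, IsCompleteHereditaryColoring 𝓕 c})
    {ℓ : ℕ} (hℓ : 1 ≤ ℓ) :
    (∃ c : V → Fin ℓ, IsCompleteHereditaryColoring 𝓕 c) ↔
      hereditaryChromaticNumber 𝓕 ≤ ℓ ∧ ℓ ≤ hereditaryAchromaticNumber 𝓕 := by
  constructor
  · rintro ⟨c, hc⟩
    exact ⟨Nat.sInf_le ⟨c, hc.2.1⟩, le_csSup hbdd ⟨c, hc⟩⟩
  · rintro ⟨hmin, hmax⟩
    have hne : {k | ∃ c : V → Fin k, IsCompleteHereditaryColoring 𝓕 c}.Nonempty := by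
      refine Set.nonempty_iff_ne_empty.2 fun hempty => ?_
      rw [hereditaryAchromaticNumber, hempty, csSup_empty] at hmax
      exact absurd (hℓ.trans hmax) (by decide)
    obtain ⟨c, hc⟩ := Nat.sSup_mem hne hbdd
    exact exists_isCompleteHereditaryColoring_of_le_of_le hc hmin hmax

end HereditaryColoring

/-- The hereditary family of vertex sets inducing a forest in `G`. The arboreal colorings of `G` are
the colorings with classes in this family. -/
def forestSets {V : Type*} (G : SimpleGraph V) : LowerSet (Set V) where
  carrier := {S | (G.induce S).IsAcyclic}
  lower' _ _ hST hS := hS.embedding (G.induceHomOfLE hST)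

/-- a finite simple graph `G` has a complete arboreal coloring with exactly
`ℓ` colors iff `va(G) ≤ ℓ ≤ ava(G)`. -/
theorem interpolation_avertexArboricity {V : Type*} [Fintype V] (G : SimpleGraph V)
    (ℓ : ℕ) (hℓ : 1 ≤ ℓ) :
    (∃ c : V → Fin ℓ, IsCompleteArborealColoring G c) ↔
      vertexArboricity G ≤ ℓ ∧ ℓ ≤ avertexArboricity G :=
  interpolation_avertexArboricity_general (forestSets G)
    (bddAbove_isCompleteHereditaryColoring _) hℓ
end

section
/- Let G be a finite simple graph and let v be a vertex of G. Then ava(G) − 1 ≤ ava(G − v) ≤ ava(G), where G − v is the graph obtained from G by deleting v. Consequently, if G₁ is an induced subgraph of G₂, then ava(G₁) ≤ ava(G₂). -/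
open Function

/-!
Absorption: let `P` be a finite family of disjoint nonempty forests, any two of which have a
cyclic union, and let `T` be a further forest, disjoint from the members of `P`. If the union of `T`
with some member of `P` is a forest, replace that member by the union; otherwise add `T` to `P` as a
new member. Either way the new family has the same properties, covers `⋃₀ P ∪ T`, and is at least as
large as `P`.

Absorbing vertices one at a time turns a complete arboreal coloring of an induced subgraph into one
of the whole graph with at least as many colors. To delete a vertex `v`, discard the color class `A`
of `v` and absorb the forest `A \ {v}`; this loses at most one color.
-/

section Acyclic

variable {V W : Type*} {G : SimpleGraph V} {H : SimpleGraph W}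

theorem isAcyclic_induce_of_subset {S T : Set V} (hST : S ⊆ T) (hT : (G.induce T).IsAcyclic) :
    (G.induce S).IsAcyclic :=
  hT.comap (G.induceHomOfLE hST).toHom (G.induceHomOfLE hST).injective

theorem range_embedding_induce (S : Set V) :
    Set.range (SimpleGraph.Embedding.induce S : G.induce S ↪g G) = S :=
  Subtype.range_coe

theorem isAcyclic_induce_image_iff (f : H ↪g G) (T : Set W) :
    (G.induce (f '' T)).IsAcyclic ↔ (H.induce T).IsAcyclic := by
  have hrange : Set.range (f.comp (SimpleGraph.Embedding.induce T)) = f '' T := by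
    rw [SimpleGraph.Embedding.coe_comp, Set.range_comp, range_embedding_induce]
  rw [← hrange]
  exact (f.comp (SimpleGraph.Embedding.induce T)).isoInduceRange.isAcyclic_iff.symm

end Acyclic

/-- The color classes of a complete arboreal coloring of the subgraph of `G` induced by `⋃₀ P`, as
an unindexed family of vertex sets of the ambient graph. Unlike colorings by `Fin k`, such families
allow classes to be removed, enlarged or added without relabelling the colors. -/
structure IsCompleteForestFamily {V : Type*} (G : SimpleGraph V) (P : Finset (Set V)) : Prop where
  nonempty : ∀ A ∈ P, A.Nonempty
  pairwiseDisjoint : (P : Set (Set V)).PairwiseDisjoint id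
  isAcyclic : ∀ A ∈ P, (G.induce A).IsAcyclic
  not_isAcyclic_union :
    (P : Set (Set V)).Pairwise fun A B => ¬ (G.induce (A ∪ B)).IsAcyclic

namespace IsCompleteForestFamily

variable {V : Type*} {G : SimpleGraph V} {P Q : Finset (Set V)} {A B T : Set V}

theorem subset (hP : IsCompleteForestFamily G P) (hQP : Q ⊆ P) : IsCompleteForestFamily G Q where
  nonempty A hA := hP.nonempty A (hQP hA)
  pairwiseDisjoint := hP.pairwiseDisjoint.subset (Finset.coe_subset.2 hQP)
  isAcyclic A hA := hP.isAcyclic A (hQP hA)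
  not_isAcyclic_union := hP.not_isAcyclic_union.mono (Finset.coe_subset.2 hQP)

protected theorem insert [DecidableEq (Set V)] (hP : IsCompleteForestFamily G P) (hB : B.Nonempty)
    (hdisj : ∀ A ∈ P, Disjoint B A) (hacyc : (G.induce B).IsAcyclic)
    (hcyc : ∀ A ∈ P, ¬ (G.induce (B ∪ A)).IsAcyclic) :
    IsCompleteForestFamily G (insert B P) where
  nonempty := (Finset.forall_mem_insert _ _ _).2 ⟨hB, hP.nonempty⟩
  pairwiseDisjoint := by
    rw [Finset.coe_insert]
    exact hP.pairwiseDisjoint.insert fun A hA _ => hdisj A hA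
  isAcyclic := (Finset.forall_mem_insert _ _ _).2 ⟨hacyc, hP.isAcyclic⟩
  not_isAcyclic_union := by
    rw [Finset.coe_insert]
    exact hP.not_isAcyclic_union.insert fun A hA _ =>
      ⟨hcyc A hA, Set.union_comm B A ▸ hcyc A hA⟩

theorem merge [DecidableEq (Set V)] (hP : IsCompleteForestFamily G P) (hA : A ∈ P)
    (hdisj : ∀ C ∈ P, Disjoint T C) (hacyc : (G.induce (A ∪ T)).IsAcyclic) :
    IsCompleteForestFamily G (insert (A ∪ T) (P.erase A)) := by
  refine (hP.subset (P.erase_subset A)).insert ((hP.nonempty A hA).inl) ?_ hacyc ?_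
  · intro C hC
    obtain ⟨hCA, hCP⟩ := Finset.mem_erase.1 hC
    exact (hP.pairwiseDisjoint hA hCP hCA.symm).union_left (hdisj C hCP)
  · intro C hC hunion
    obtain ⟨hCA, hCP⟩ := Finset.mem_erase.1 hC
    exact hP.not_isAcyclic_union hA hCP hCA.symm <| isAcyclic_induce_of_subset
      (Set.union_subset_union_left C Set.subset_union_left) hunion

theorem card_merge [DecidableEq (Set V)] (hP : IsCompleteForestFamily G P) (hA : A ∈ P) :
    (insert (A ∪ T) (P.erase A)).card = P.card := by
  have hnotMem : A ∪ T ∉ P.erase A := fun hmem => by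
    obtain ⟨hne, hAT⟩ := Finset.mem_erase.1 hmem
    have hdisj : Disjoint A (A ∪ T) := hP.pairwiseDisjoint hA hAT hne.symm
    exact (hP.nonempty A hA).ne_empty (hdisj.eq_bot_of_le Set.subset_union_left)
  rw [Finset.card_insert_of_notMem hnotMem, Finset.card_erase_add_one hA]

theorem exists_sUnion_eq_union_of_isAcyclic (hP : IsCompleteForestFamily G P)
    (hT : (G.induce T).IsAcyclic) :
    ∃ Q : Finset (Set V), IsCompleteForestFamily G Q ∧
      ⋃₀ (Q : Set (Set V)) = ⋃₀ P ∪ T ∧ P.card ≤ Q.card := by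
  classical
  wlog hdisj : Disjoint T (⋃₀ P) generalizing T
  · rw [← Set.union_sdiff_self]
    exact this (isAcyclic_induce_of_subset Set.sdiff_subset hT) Set.disjoint_sdiff_left
  rw [Set.disjoint_sUnion_right] at hdisj
  rcases T.eq_empty_or_nonempty with rfl | hTne
  · exact ⟨P, hP, (Set.union_empty _).symm, le_rfl⟩
  by_cases hmerge : ∃ A ∈ P, (G.induce (A ∪ T)).IsAcyclic
  · obtain ⟨A, hA, hAT⟩ := hmerge
    refine ⟨insert (A ∪ T) (P.erase A), hP.merge hA hdisj hAT, ?_, (hP.card_merge hA).ge⟩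
    calc ⋃₀ ((insert (A ∪ T) (P.erase A) : Finset (Set V)) : Set (Set V))
        = ⋃₀ (insert A (P.erase A) : Finset (Set V)) ∪ T := by
          simp only [Finset.coe_insert, Set.sUnion_insert, Set.union_right_comm]
      _ = ⋃₀ P ∪ T := by rw [Finset.insert_erase hA]
  · push Not at hmerge
    refine ⟨insert T P, hP.insert hTne hdisj hT fun A hA => ?_, ?_,
      Finset.card_le_card (P.subset_insert T)⟩
    · rw [Set.union_comm]
      exact hmerge A hA
    · rw [Finset.coe_insert, Set.sUnion_insert, Set.union_comm]

theorem exists_sUnion_eq_union_of_finite (hP : IsCompleteForestFamily G P) (hT : T.Finite) :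
    ∃ Q : Finset (Set V), IsCompleteForestFamily G Q ∧
      ⋃₀ (Q : Set (Set V)) = ⋃₀ P ∪ T ∧ P.card ≤ Q.card := by
  induction T, hT using Set.Finite.induction_on with
  | empty => exact ⟨P, hP, (Set.union_empty _).symm, le_rfl⟩
  | @insert v T _ _ ih =>
    obtain ⟨Q, hQ, hQT, hPQ⟩ := ih
    obtain ⟨R, hR, hRv, hQR⟩ := hQ.exists_sUnion_eq_union_of_isAcyclic
      (T := {v}) SimpleGraph.IsAcyclic.of_subsingleton
    refine ⟨R, hR, ?_, hPQ.trans hQR⟩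
    rw [hRv, hQT, Set.union_assoc, Set.union_singleton]

theorem exists_sUnion_eq_sdiff (hP : IsCompleteForestFamily G P) (hA : A ∈ P) (hBA : B ⊆ A) :
    ∃ Q : Finset (Set V), IsCompleteForestFamily G Q ∧
      ⋃₀ (Q : Set (Set V)) = ⋃₀ P \ B ∧ P.card ≤ Q.card + 1 := by
  classical
  obtain ⟨Q, hQ, hQA, hcard⟩ := (hP.subset (P.erase_subset A)).exists_sUnion_eq_union_of_isAcyclic
    (isAcyclic_induce_of_subset (Set.sdiff_subset (t := B)) (hP.isAcyclic A hA))
  have hdisj : Disjoint (⋃₀ (P.erase A : Set (Set V))) B := by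
    refine Set.disjoint_sUnion_left.2 fun C hC => ?_
    obtain ⟨hCA, hCP⟩ := Finset.mem_erase.1 hC
    exact (hP.pairwiseDisjoint hCP hA hCA).mono_right hBA
  refine ⟨Q, hQ, ?_, ?_⟩
  · calc ⋃₀ (Q : Set (Set V))
        = (⋃₀ (P.erase A : Set (Set V)) ∪ A) \ B := by
          rw [hQA, Set.union_sdiff_distrib, hdisj.sdiff_eq_left]
      _ = ⋃₀ P \ B := by
          rw [Set.union_comm, ← Set.sUnion_insert, ← Finset.coe_insert, Finset.insert_erase hA]
  · rw [← Finset.card_erase_add_one hA]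
    exact Nat.add_le_add_right hcard 1

end IsCompleteForestFamily

/-- The numbers of colors in the complete arboreal colorings of `G`, so that
`avertexArboricity G = sSup (completeArborealSizes G)` holds definitionally. -/
def completeArborealSizes {V : Type*} (G : SimpleGraph V) : Set ℕ :=
  {k | ∃ c : V → Fin k, IsCompleteArborealColoring G c}

section Sizes

variable {V W : Type*} {G : SimpleGraph V} {H : SimpleGraph W} {k : ℕ}

theorem IsCompleteArborealColoring.exists_isCompleteForestFamily {c : W → Fin k}
    (hc : IsCompleteArborealColoring H c) (f : H ↪g G) :
    ∃ P : Finset (Set V), IsCompleteForestFamily G P ∧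
      ⋃₀ (P : Set (Set V)) = Set.range f ∧ P.card = k := by
  classical
  obtain ⟨hsurj, hacyc, hcyc⟩ := hc
  let F : Fin k → Set V := fun i => f '' (c ⁻¹' {i})
  have hdisj : Pairwise (Disjoint on F) := fun i j hij =>
    (Set.disjoint_image_iff f.injective).2 ((Set.disjoint_singleton.2 hij).preimage c)
  have hcoe : (Finset.univ.image F : Set (Set V)) = Set.range F := by
    rw [Finset.coe_image, Finset.coe_univ, Set.image_univ]
  refine ⟨Finset.univ.image F, ⟨?_, ?_, ?_, ?_⟩, ?_, ?_⟩
  · simpa only [Finset.forall_mem_image] using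
      fun i _ => ((Set.singleton_nonempty i).preimage hsurj).image f
  · rw [hcoe]
    exact hdisj.range_pairwise
  · simpa only [Finset.forall_mem_image] using
      fun i _ => (isAcyclic_induce_image_iff f _).2 (hacyc i)
  · rw [hcoe]
    refine Pairwise.range_pairwise fun i j hij => ?_
    rw [Function.onFun, ← Set.image_union, isAcyclic_induce_image_iff]
    exact hcyc i j hij
  · rw [hcoe, Set.sUnion_range, ← Set.image_iUnion, ← Set.preimage_iUnion,
      Set.iUnion_of_singleton, Set.preimage_univ, Set.image_univ]
  · have hinj : Injective F :=
      f.injective.image_injective.comp (hsurj.preimage_injective.comp Set.singleton_injective)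
    rw [Finset.card_image_of_injective _ hinj, Finset.card_univ, Fintype.card_fin]

theorem IsCompleteForestFamily.card_mem_completeArborealSizes {P : Finset (Set V)}
    (hP : IsCompleteForestFamily G P) (f : H ↪g G)
    (hcover : ⋃₀ (P : Set (Set V)) = Set.range f) : P.card ∈ completeArborealSizes H := by
  have hclass (w : W) : ∃ A : P, f w ∈ A.1 := by
    obtain ⟨A, hA, hwA⟩ := hcover.ge (Set.mem_range_self w)
    exact ⟨⟨A, hA⟩, hwA⟩
  choose cls hcls using hclass
  have cls_eq {w : W} {A : P} (hw : f w ∈ A.1) : cls w = A :=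
    Subtype.ext (hP.pairwiseDisjoint.elim_set (cls w).2 A.2 (f w) (hcls w) hw)
  have image_fiber (i : Fin P.card) :
      f '' ((P.equivFin ∘ cls) ⁻¹' {i}) = (P.equivFin.symm i).1 := by
    ext x
    constructor
    · rintro ⟨w, rfl, rfl⟩
      simpa using hcls w
    · intro hx
      obtain ⟨w, rfl⟩ := hcover.le ⟨_, (P.equivFin.symm i).2, hx⟩
      exact ⟨w, by simp [cls_eq hx], rfl⟩
  refine ⟨P.equivFin ∘ cls, P.equivFin.surjective.comp fun A => ?_, fun i => ?_, fun i j hij => ?_⟩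
  · obtain ⟨x, hx⟩ := hP.nonempty A A.2
    obtain ⟨w, rfl⟩ := hcover.le ⟨A, A.2, hx⟩
    exact ⟨w, cls_eq hx⟩
  · rw [← isAcyclic_induce_image_iff f, image_fiber]
    exact hP.isAcyclic _ (P.equivFin.symm i).2
  · rw [← isAcyclic_induce_image_iff f, Set.image_union, image_fiber, image_fiber]
    exact hP.not_isAcyclic_union (P.equivFin.symm i).2 (P.equivFin.symm j).2
      (Subtype.val_injective.ne (P.equivFin.symm.injective.ne hij))

theorem bddAbove_completeArborealSizes [Finite V] (G : SimpleGraph V) :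
    BddAbove (completeArborealSizes G) :=
  ⟨Nat.card V, fun _ ⟨_, hsurj, _⟩ => by simpa using Nat.card_le_card_of_surjective _ hsurj⟩

theorem isCofinalFor_completeArborealSizes_induce {S : Set V} (hS : Sᶜ.Finite) :
    IsCofinalFor (completeArborealSizes (G.induce S)) (completeArborealSizes G) := by
  rintro _ ⟨c, hc⟩
  obtain ⟨P, hP, hcover, rfl⟩ := hc.exists_isCompleteForestFamily (.induce S)
  obtain ⟨Q, hQ, hQcover, hPQ⟩ := hP.exists_sUnion_eq_union_of_finite hS
  refine ⟨Q.card, hQ.card_mem_completeArborealSizes .refl ?_, hPQ⟩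
  rw [hQcover, hcover, range_embedding_induce, Set.union_compl_self]
  exact Set.range_id.symm

theorem exists_mem_completeArborealSizes_induce_compl_singleton (hk : k ∈ completeArborealSizes G)
    (v : V) : ∃ l ∈ completeArborealSizes (G.induce {v}ᶜ), k ≤ l + 1 := by
  obtain ⟨c, hc⟩ := hk
  obtain ⟨P, hP, hcover, rfl⟩ := hc.exists_isCompleteForestFamily .refl
  replace hcover : ⋃₀ (P : Set (Set V)) = Set.univ := hcover.trans Set.range_id
  obtain ⟨A, hA, hvA⟩ := hcover.ge (Set.mem_univ v)
  obtain ⟨Q, hQ, hQcover, hPQ⟩ := hP.exists_sUnion_eq_sdiff hA (Set.singleton_subset_iff.2 hvA)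
  refine ⟨Q.card, hQ.card_mem_completeArborealSizes (.induce {v}ᶜ) ?_, hPQ⟩
  rw [hQcover, hcover, ← Set.compl_eq_univ_sdiff, range_embedding_induce]

theorem avertexArboricity_induce_le (hG : BddAbove (completeArborealSizes G)) {S : Set V}
    (hS : Sᶜ.Finite) : avertexArboricity (G.induce S) ≤ avertexArboricity G :=
  csSup_le' (upperBounds_mono_of_isCofinalFor (isCofinalFor_completeArborealSizes_induce hS)
    (isLUB_csSup' hG).1)

theorem avertexArboricity_le_induce_compl_singleton_add_one
    (hG : BddAbove (completeArborealSizes G)) (v : V) :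
    avertexArboricity G ≤ avertexArboricity (G.induce ({v}ᶜ : Set V)) + 1 := by
  have hbdd : BddAbove (completeArborealSizes (G.induce ({v}ᶜ : Set V))) :=
    Set.Nonempty.mono (upperBounds_mono_of_isCofinalFor
      (isCofinalFor_completeArborealSizes_induce (by simp))) hG
  refine csSup_le' fun k hk => ?_
  obtain ⟨l, hl, hkl⟩ := exists_mem_completeArborealSizes_induce_compl_singleton hk v
  exact hkl.trans (Nat.add_le_add_right (le_csSup hbdd hl) 1)

end Sizes

theorem avertexArboricity_vertex_deletion_general {V : Type*} (G : SimpleGraph V)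
    (hG : BddAbove (completeArborealSizes G)) :
    (∀ v : V,
      avertexArboricity G - 1 ≤ avertexArboricity (G.induce ({v}ᶜ : Set V)) ∧
      avertexArboricity (G.induce ({v}ᶜ : Set V)) ≤ avertexArboricity G) ∧
    (∀ S : Set V, Sᶜ.Finite → avertexArboricity (G.induce S) ≤ avertexArboricity G) :=
  ⟨fun v => ⟨Nat.sub_le_of_le_add (avertexArboricity_le_induce_compl_singleton_add_one hG v),
    avertexArboricity_induce_le hG (by simp)⟩, fun _ => avertexArboricity_induce_le hG⟩

/-- for any vertex `v` of a finite simple graph `G`,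
`ava(G) − 1 ≤ ava(G − v) ≤ ava(G)`; consequently the a-vertex arboricity is monotone
under induced subgraphs. -/
theorem avertexArboricity_vertex_deletion :
    (∀ (V : Type) [Fintype V] (G : SimpleGraph V) (v : V),
      avertexArboricity G - 1 ≤ avertexArboricity (G.induce ({v}ᶜ : Set V)) ∧
      avertexArboricity (G.induce ({v}ᶜ : Set V)) ≤ avertexArboricity G) ∧
    (∀ (V : Type) [Fintype V] (G : SimpleGraph V) (S : Set V),
      avertexArboricity (G.induce S) ≤ avertexArboricity G) := by
  have general (V : Type) [Fintype V] (G : SimpleGraph V) :=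
    avertexArboricity_vertex_deletion_general G (bddAbove_completeArborealSizes G)
  exact ⟨fun V _ G => (general V G).1, fun V _ G S => (general V G).2 S (Set.toFinite _)⟩
end

section
/- For integers n ≥ 1 and k ≥ 3, let D(n,k) be the digraph whose vertex set is the disjoint union of k classes V_1, …, V_k of size n each, with edge set consisting of all arcs from V_i to V_{i+1} for each i (indices modulo k). Then adi(D(n,k)) ≤ k and τ(D(n,k)) = n. -/
open Function

/-!
A directed cycle of `D(n,k)` advances one class per step, so it visits every class; conversely,
one vertex chosen from each class gives a directed cycle. Hence a vertex set contains a directed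
cycle exactly when it meets all `k` classes. An acyclic color class therefore misses some class
`V_i`, and in a complete coloring two colors cannot miss the same `V_i`, because their union would
then miss it too: there are at most `k` colors. Likewise a feedback vertex set is precisely a set
containing some `V_i`, so the smallest one has the size of the smallest class.
-/

section DicycleClasses

variable {V ι : Type*} {D : V → V → Prop} {C : ι → Set V}

/-- The family `C` of vertex classes determines which vertex sets of `D` contain a directed cycle:
they are the sets that meet every class. The classes may be empty or overlap. -/
def CharacterizesDicycles (D : V → V → Prop) (C : ι → Set V) : Prop :=
  ∀ S, HasDicycle D S ↔ ∀ i, (C i ∩ S).Nonempty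

namespace CharacterizesDicycles

lemma nonempty_index (h : CharacterizesDicycles D C) : Nonempty ι := by
  by_contra hι
  rw [not_nonempty_iff] at hι
  obtain ⟨v, hv⟩ := (h ∅).2 isEmptyElim
  obtain ⟨w, hvw, -⟩ := Relation.TransGen.head'_iff.1 hv
  exact hvw.1

lemma exists_disjoint_of_not_hasDicycle (h : CharacterizesDicycles D C) {S : Set V}
    (hS : ¬ HasDicycle D S) : ∃ i, Disjoint (C i) S := by
  simpa only [h S, not_forall, Set.not_nonempty_iff_eq_empty, ← Set.disjoint_iff_inter_eq_empty]
    using hS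

lemma not_hasDicycle_compl_iff (h : CharacterizesDicycles D C) {F : Set V} :
    ¬ HasDicycle D Fᶜ ↔ ∃ i, C i ⊆ F := by
  simp only [h Fᶜ, Set.inter_compl_nonempty_iff, not_forall, not_not]

lemma card_colors_le [Fintype ι] (h : CharacterizesDicycles D C) {m : ℕ} {c : V → Fin m}
    (hc : IsCompleteAcyclicColoring D c) : m ≤ Fintype.card ι := by
  obtain ⟨-, acyclic, complete⟩ := hc
  choose missed hmissed using fun i => h.exists_disjoint_of_not_hasDicycle (acyclic i)
  have missed_injective : Injective missed := by
    intro i j hij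
    by_contra hne
    refine ((h _).1 (complete i j hne) (missed i)).not_disjoint ?_
    exact Set.disjoint_union_right.2 ⟨hmissed i, hij ▸ hmissed j⟩
  simpa only [Fintype.card_fin] using Fintype.card_le_of_injective missed missed_injective

theorem adichromaticNumber_le [Fintype ι] (h : CharacterizesDicycles D C) :
    adichromaticNumber D ≤ Fintype.card ι :=
  csSup_le' fun _ ⟨_, hc⟩ => h.card_colors_le hc

theorem digraphFVSNumber_eq [Fintype V] (h : CharacterizesDicycles D C) :
    digraphFVSNumber D = ⨅ i, (C i).ncard := by
  have := h.nonempty_index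
  have class_mem (i : ι) : (C i).ncard ∈
      {m | ∃ F : Finset V, F.card = m ∧ ¬ HasDicycle D ((F : Set V)ᶜ)} := by
    classical
    refine ⟨(C i).toFinset, (Set.ncard_eq_toFinset_card' _).symm, ?_⟩
    exact h.not_hasDicycle_compl_iff.2 ⟨i, (Set.coe_toFinset _).ge⟩
  refine le_antisymm (le_ciInf fun i => Nat.sInf_le (class_mem i)) ?_
  refine le_csInf ⟨_, class_mem (Classical.arbitrary ι)⟩ ?_
  rintro _ ⟨F, rfl, hF⟩
  obtain ⟨i, hi⟩ := h.not_hasDicycle_compl_iff.1 hF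
  calc ⨅ i, (C i).ncard ≤ (C i).ncard := ciInf_le (OrderBot.bddBelow _) i
    _ ≤ (F : Set V).ncard := Set.ncard_le_ncard hi
    _ = F.card := Set.ncard_coe_finset F

end CharacterizesDicycles

end DicycleClasses

section SuccessorBlowup

variable {V ι : Type*} {σ : ι → ι} {part : V → ι} {S : Set V}

lemma exists_rel_transGen_self {r : V → V → Prop} {v : V} (hv : Relation.TransGen r v v) :
    ∃ w, r v w ∧ Relation.TransGen r w w := by
  obtain ⟨w, hvw, hwv⟩ := Relation.TransGen.head'_iff.1 hv
  exact ⟨w, hvw, .tail' hwv hvw⟩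

lemma nonempty_fiber_inter_of_hasDicycle (hσ : ∀ i j, ∃ m, σ^[m] i = j)
    (hS : HasDicycle (fun u v => part v = σ (part u)) S) (i : ι) :
    (part ⁻¹' {i} ∩ S).Nonempty := by
  obtain ⟨v, hv⟩ := hS
  have visits (m : ℕ) : ∃ w, part w = σ^[m] (part v) ∧
      Relation.TransGen (fun a b => a ∈ S ∧ b ∈ S ∧ part b = σ (part a)) w w := by
    induction m with
    | zero => exact ⟨v, rfl, hv⟩
    | succ m ih =>
      obtain ⟨w, hw, hww⟩ := ih
      obtain ⟨x, ⟨-, -, hx⟩, hxx⟩ := exists_rel_transGen_self hww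
      exact ⟨x, by rw [hx, hw, iterate_succ_apply'], hxx⟩
  obtain ⟨m, rfl⟩ := hσ (part v) i
  obtain ⟨w, hw, hww⟩ := visits m
  obtain ⟨_, ⟨hwS, -⟩, -⟩ := exists_rel_transGen_self hww
  exact ⟨w, hw, hwS⟩

lemma hasDicycle_of_forall_nonempty_fiber_inter [Nonempty ι] (hσ : ∀ i j, ∃ m, σ^[m] i = j)
    (hS : ∀ i, (part ⁻¹' {i} ∩ S).Nonempty) :
    HasDicycle (fun u v => part v = σ (part u)) S := by
  choose rep part_rep rep_mem using hS
  have arc (i : ι) : rep i ∈ S ∧ rep (σ i) ∈ S ∧ part (rep (σ i)) = σ (part (rep i)) :=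
    ⟨rep_mem i, rep_mem (σ i), by rw [part_rep, part_rep]⟩
  have walk (i : ι) (m : ℕ) : Relation.ReflTransGen
      (fun a b => a ∈ S ∧ b ∈ S ∧ part b = σ (part a)) (rep i) (rep (σ^[m] i)) := by
    induction m with
    | zero => exact .refl
    | succ m ih => exact ih.tail (by simpa only [iterate_succ_apply'] using arc (σ^[m] i))
  let i := Classical.arbitrary ι
  obtain ⟨m, hm⟩ := hσ (σ i) i
  exact ⟨rep i, .head' (arc i) (by simpa only [hm] using walk (σ i) m)⟩

theorem characterizesDicycles_successor [Nonempty ι] (hσ : ∀ i j, ∃ m, σ^[m] i = j) :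
    CharacterizesDicycles (fun u v => part v = σ (part u)) fun i => part ⁻¹' {i} :=
  fun _ =>
    ⟨nonempty_fiber_inter_of_hasDicycle hσ, hasDicycle_of_forall_nonempty_fiber_inter hσ⟩

end SuccessorBlowup

section CyclicClasses

variable {k : ℕ} [NeZero k]

open scoped Fin.CommRing in
lemma exists_iterate_add_one_eq (i j : Fin k) : ∃ m, (· + 1)^[m] i = j :=
  ⟨(j - i).val, by simp only [add_right_iterate, nsmul_one, Fin.cast_val_eq_self,
    add_sub_cancel]⟩

lemma val_eq_val_add_one_mod_iff {i j : Fin k} : j.val = (i.val + 1) % k ↔ j = i + 1 := by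
  rw [Fin.ext_iff, Fin.val_add, Fin.val_one', Nat.add_mod_mod]

theorem turan_orientation_adi_tau_general {V : Type*} [Fintype V] (part : V → Fin k) :
    adichromaticNumber (fun u v => part v = part u + 1) ≤ k ∧
      digraphFVSNumber (fun u v => part v = part u + 1) = ⨅ i, (part ⁻¹' {i}).ncard := by
  have h : CharacterizesDicycles (fun u v => part v = part u + 1) fun i => part ⁻¹' {i} :=
    characterizesDicycles_successor exists_iterate_add_one_eq
  exact ⟨by simpa only [Fintype.card_fin] using h.adichromaticNumber_le, h.digraphFVSNumber_eq⟩

end CyclicClasses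

lemma ncard_fst_preimage_singleton {α β : Type*} (a : α) :
    (Prod.fst ⁻¹' {a} : Set (α × β)).ncard = Nat.card β := by
  rw [← Set.prod_univ, Set.ncard_prod, Set.ncard_singleton, one_mul, Set.ncard_univ]

/-- for the cyclically oriented Turán digraph `D(n,k)` (`n ≥ 1`, `k ≥ 3`),
whose vertices are the pairs in `Fin k × Fin n` (class index first) and whose arcs go from
each class `V_i` to the cyclically next class `V_{i+1}`, we have `adi(D(n,k)) ≤ k` and
`τ(D(n,k)) = n`. -/
theorem turan_orientation_adi_tau (n k : ℕ) (hn : 1 ≤ n) (hk : 3 ≤ k) :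
    adichromaticNumber (fun p q : Fin k × Fin n => q.1.val = (p.1.val + 1) % k) ≤ k ∧
      digraphFVSNumber (fun p q : Fin k × Fin n => q.1.val = (p.1.val + 1) % k) = n := by
  have : NeZero k := ⟨by omega⟩
  simpa only [val_eq_val_add_one_mod_iff, ncard_fst_preimage_singleton, Nat.card_fin, ciInf_const]
    using turan_orientation_adi_tau_general (Prod.fst : Fin k × Fin n → Fin k)
end
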